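/- arXiv:2412.16999 — 11 statements merged into one kernel-verified Lean document; each statement's English description precedes it below -/
import Mathlib

section
/- For every real number a, every integer N ≥ 1 and every z ∈ ℂ, one has the identity (cosh(z/N) + a·sinh(z/N))^N = Σ_{j=0}^{N} C_j(N,a)·exp((1 − 2j/N)·z), where C_j(N,a) = binom(N,j)·((1+a)/2)^{N−j}·((1−a)/2)^{j}. -/
/-!
Writing `cosh` and `sinh` through exponentials gives
`cosh w + a sinh w = (1 + a) / 2 * exp w + (1 - a) / 2 * exp (-w)` with `w = z / N`.
The binomial theorem expands the `N`-th power, and the `j`-th term carries the exponential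
of `(N - j) w - j w = (1 - 2 j / N) z`.
-/

open Complex Finset

theorem superoscillating_representation (a : ℝ) (N : ℕ) (hN : 1 ≤ N) (z : ℂ) :
    (Complex.cosh (z / N) + (a : ℂ) * Complex.sinh (z / N)) ^ N =
      ∑ j ∈ Finset.range (N + 1),
        ((N.choose j : ℂ) * (((1 : ℂ) + a) / 2) ^ (N - j) * (((1 : ℂ) - a) / 2) ^ j) *
          Complex.exp ((1 - 2 * (j : ℂ) / N) * z) := by
  have hN0 : (N : ℂ) ≠ 0 := by exact_mod_cast Nat.one_le_iff_ne_zero.mp hN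
  -- In exponential form the base is a binomial, with the `exp (-z / N)` term placed first so
  -- that its exponent in `add_pow` is the summation index `j`.
  have hbase : Complex.cosh (z / N) + (a : ℂ) * Complex.sinh (z / N) =
      ((1 : ℂ) - a) / 2 * Complex.exp (-(z / N)) + ((1 : ℂ) + a) / 2 * Complex.exp (z / N) := by
    rw [Complex.cosh, Complex.sinh]
    ring
  rw [hbase, add_pow]
  refine Finset.sum_congr rfl fun j hj => ?_
  have hjN : j ≤ N := Nat.lt_succ_iff.mp (Finset.mem_range.mp hj)
  have hexp : Complex.exp ((1 - 2 * (j : ℂ) / N) * z) =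
      Complex.exp (-(z / N)) ^ j * Complex.exp (z / N) ^ (N - j) := by
    rw [← Complex.exp_nat_mul, ← Complex.exp_nat_mul, ← Complex.exp_add, Nat.cast_sub hjN]
    congr 1
    field_simp
    ring
  rw [hexp, mul_pow, mul_pow]
  ring
end

section
/- For every real number a, every integer N ≥ 1 and every z ∈ ℂ, one has |(cosh(z/N) + a·sinh(z/N))^N| ≤ exp(|a|·|z| + |Re z|) ≤ exp((|a|+1)·|z|). -/
/-!
Put `w = z / N`. Since `cosh' = sinh` and `sinh' = cosh`, and `‖cosh u‖ ≤ exp |Re u|`, the mean value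
inequality on the strip `|Re u| ≤ |Re w|` (convex, containing `0` and `w`) gives
`‖sinh w‖ ≤ exp |Re w| * ‖w‖`. Hence
`‖cosh w + a sinh w‖ ≤ exp |Re w| * (1 + |a| ‖w‖) ≤ exp (|a| ‖w‖ + |Re w|)`,
and raising this to the `N`-th power multiplies the exponent by `N`, turning `w` back into `z`.
-/

lemma norm_cosh_le_exp_abs_re (u : ℂ) : ‖Complex.cosh u‖ ≤ Real.exp |u.re| := by
  have h1 : Real.exp u.re ≤ Real.exp |u.re| := Real.exp_le_exp.2 (le_abs_self _)
  have h2 : Real.exp (-u.re) ≤ Real.exp |u.re| := Real.exp_le_exp.2 (neg_le_abs _)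
  have h3 : ‖Complex.exp u + Complex.exp (-u)‖ ≤ Real.exp u.re + Real.exp (-u.re) := by
    simpa [Complex.norm_exp] using norm_add_le (Complex.exp u) (Complex.exp (-u))
  rw [Complex.cosh, norm_div, Complex.norm_ofNat]
  linarith

lemma norm_sinh_le_exp_abs_re_mul_norm (w : ℂ) :
    ‖Complex.sinh w‖ ≤ Real.exp |w.re| * ‖w‖ := by
  have hconv : Convex ℝ {u : ℂ | |u.re| ≤ |w.re|} := by
    simp only [abs_le]
    exact (convex_Icc (-|w.re|) |w.re|).linear_preimage Complex.reLm
  have h0 : (0 : ℂ) ∈ {u : ℂ | |u.re| ≤ |w.re|} := by simp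
  have hw : w ∈ {u : ℂ | |u.re| ≤ |w.re|} := by simp
  have h := hconv.norm_image_sub_le_of_norm_hasDerivWithin_le (f := Complex.sinh)
    (f' := Complex.cosh) (C := Real.exp |w.re|) (x := 0) (y := w)
    (fun u _ => (Complex.hasDerivAt_sinh u).hasDerivWithinAt)
    (fun u hu => (norm_cosh_le_exp_abs_re u).trans (Real.exp_le_exp.2 hu))
    h0 hw
  simpa using h

lemma norm_cosh_add_mul_sinh_le (a : ℝ) (w : ℂ) :
    ‖Complex.cosh w + (a : ℂ) * Complex.sinh w‖ ≤ Real.exp (|a| * ‖w‖ + |w.re|) :=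
  calc ‖Complex.cosh w + (a : ℂ) * Complex.sinh w‖
      ≤ ‖Complex.cosh w‖ + |a| * ‖Complex.sinh w‖ := by
        simpa using norm_add_le (Complex.cosh w) ((a : ℂ) * Complex.sinh w)
    _ ≤ Real.exp |w.re| + |a| * (Real.exp |w.re| * ‖w‖) := by
        gcongr
        · exact norm_cosh_le_exp_abs_re w
        · exact norm_sinh_le_exp_abs_re_mul_norm w
    _ = (|a| * ‖w‖ + 1) * Real.exp |w.re| := by ring
    _ ≤ Real.exp (|a| * ‖w‖) * Real.exp |w.re| := by
        gcongr
        exact Real.add_one_le_exp _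
    _ = Real.exp (|a| * ‖w‖ + |w.re|) := (Real.exp_add _ _).symm

theorem superoscillating_growth_bound (a : ℝ) (N : ℕ) (hN : 1 ≤ N) (z : ℂ) :
    ‖(Complex.cosh (z / N) + (a : ℂ) * Complex.sinh (z / N)) ^ N‖ ≤
        Real.exp (|a| * ‖z‖ + |z.re|) ∧
      Real.exp (|a| * ‖z‖ + |z.re|) ≤ Real.exp ((|a| + 1) * ‖z‖) := by
  constructor
  · have hN0 : (N : ℝ) ≠ 0 := by positivity
    have hre : |(z / N).re| = |z.re| / N := by
      rw [Complex.div_natCast_re, abs_div, Nat.abs_cast]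
    have hnorm : ‖z / N‖ = ‖z‖ / N := by rw [norm_div, Complex.norm_natCast]
    rw [norm_pow]
    refine (pow_le_pow_left₀ (norm_nonneg _) (norm_cosh_add_mul_sinh_le a (z / N)) N).trans_eq ?_
    rw [← Real.exp_nat_mul, hre, hnorm]
    congr 1
    field_simp
  · rw [Real.exp_le_exp]
    linarith [Complex.abs_re_le_norm z]
end

section
/- For every real number a, every integer N ≥ 1 and every z ∈ ℂ, one has |a·sinh(z/N) − sinh(a·z/N)| ≤ (|a²−1|/(6N²))·|z|²·exp(α·|z|/N), where α := max(1, |a|). -/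
/-!
Put `w = z / N`, `r = ‖w‖`, `α = max 1 |a|`. In the power series
`a sinh w - sinh (a w) = ∑ (a - a ^ (2k+1)) / (2k+1)! * w ^ (2k+1)` the term `k = 0` vanishes.
For the others, telescoping the factor `a ^ 2 - 1` out gives
`|a - a ^ (2k+3)| ≤ |a ^ 2 - 1| (k+1) α ^ (2k+1)`, and
`(k+1) / (2k+3)! = 1 / (2 (2k+3) (2k+1)!) ≤ 1 / (6 (2k+1)!)`.
Hence the series is dominated termwise by `|a ^ 2 - 1| / 6 * r ^ 2` times the series of
`sinh (α r)`, and `sinh (α r) ≤ exp (α r)`.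
-/

theorem abs_sub_pow_odd_le (a : ℝ) (k : ℕ) :
    |a - a ^ (2 * k + 3)| ≤ |a ^ 2 - 1| * ((k + 1) * (max 1 |a|) ^ (2 * k + 1)) := by
  have h1 : (1 : ℝ) ≤ max 1 |a| := le_max_left _ _
  have h2 : |a| ≤ max 1 |a| := le_max_right _ _
  generalize max 1 |a| = α at h1 h2
  induction k with
  | zero =>
    have e : a - a ^ (2 * 0 + 3) = -((a ^ 2 - 1) * a) := by ring
    rw [e, abs_neg, abs_mul]
    simpa using mul_le_mul_of_nonneg_left h2 (abs_nonneg (a ^ 2 - 1))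
  | succ k ih =>
    have e : a - a ^ (2 * (k + 1) + 3)
        = (a - a ^ (2 * k + 3)) + -((a ^ 2 - 1) * a ^ (2 * k + 3)) := by ring
    have hp : |a| ^ (2 * k + 3) ≤ α ^ (2 * k + 3) := by gcongr
    have hq : α ^ (2 * k + 1) ≤ α ^ (2 * k + 3) := pow_le_pow_right₀ h1 (by omega)
    rw [e]
    refine (abs_add_le _ _).trans ?_
    rw [abs_neg, abs_mul, abs_pow]
    calc _ ≤ |a ^ 2 - 1| * ((k + 1) * α ^ (2 * k + 1)) + |a ^ 2 - 1| * |a| ^ (2 * k + 3) := by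
          gcongr
      _ ≤ |a ^ 2 - 1| * ((k + 1) * α ^ (2 * k + 3)) + |a ^ 2 - 1| * α ^ (2 * k + 3) := by
          gcongr
      _ = _ := by push_cast; ring

theorem norm_mul_sinh_sub_sinh_le (a : ℝ) (w : ℂ) :
    ‖(a : ℂ) * Complex.sinh w - Complex.sinh (a * w)‖ ≤
      |a ^ 2 - 1| / 6 * ‖w‖ ^ 2 * Real.sinh (max 1 |a| * ‖w‖) := by
  have hf := ((Complex.hasSum_sinh w).mul_left (a : ℂ)).sub (Complex.hasSum_sinh (a * w))
  have hf' := (hasSum_nat_add_iff' 1).mpr hf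
  have hg := (Real.hasSum_sinh (max 1 |a| * ‖w‖)).mul_left (|a ^ 2 - 1| / 6 * ‖w‖ ^ 2)
  have key := hf'.norm_le_of_bounded hg ?_
  · simpa using key
  intro k
  have e : (a : ℂ) * (w ^ (2 * (k + 1) + 1) / ((2 * (k + 1) + 1).factorial : ℂ))
      - (a * w) ^ (2 * (k + 1) + 1) / ((2 * (k + 1) + 1).factorial : ℂ)
      = ((a - a ^ (2 * k + 3) : ℝ) : ℂ) * w ^ (2 * k + 3) / ((2 * k + 3).factorial : ℂ) := by
    rw [show 2 * (k + 1) + 1 = 2 * k + 3 by ring]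
    push_cast
    ring
  rw [e, norm_div, norm_mul, norm_pow, Complex.norm_real, Complex.norm_natCast, Real.norm_eq_abs]
  have hfac : ((2 * k + 3).factorial : ℝ)
      = (2 * k + 3) * (2 * (k + 1)) * ((2 * k + 1).factorial : ℝ) := by
    rw [show 2 * k + 3 = (2 * k + 1) + 1 + 1 by ring, Nat.factorial_succ, Nat.factorial_succ]
    push_cast
    ring
  have hF : (0 : ℝ) < ((2 * k + 1).factorial : ℝ) := by positivity
  rw [hfac]
  have hk : (0 : ℝ) ≤ k := k.cast_nonneg
  have hα : (0 : ℝ) ≤ max 1 |a| := zero_le_one.trans (le_max_left _ _)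
  calc _ ≤ (|a ^ 2 - 1| * ((k + 1) * (max 1 |a|) ^ (2 * k + 1))) * ‖w‖ ^ (2 * k + 3)
        / ((2 * k + 3) * (2 * (k + 1)) * ((2 * k + 1).factorial : ℝ)) := by
        gcongr
        exact abs_sub_pow_odd_le a k
    _ = |a ^ 2 - 1| / (2 * (2 * k + 3)) * ‖w‖ ^ 2 *
        ((max 1 |a| * ‖w‖) ^ (2 * k + 1) / ((2 * k + 1).factorial : ℝ)) := by
        field_simp
        ring
    _ ≤ _ := by
        gcongr
        linarith

theorem sinh_difference_estimate (a : ℝ) (N : ℕ) (hN : 1 ≤ N) (z : ℂ) :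
    ‖(a : ℂ) * Complex.sinh (z / N) - Complex.sinh ((a : ℂ) * z / N)‖ ≤
      |a ^ 2 - 1| / (6 * (N : ℝ) ^ 2) * ‖z‖ ^ 2 *
        Real.exp (max 1 |a| * ‖z‖ / N) := by
  have h := norm_mul_sinh_sub_sinh_le a (z / N)
  rw [norm_div, Complex.norm_natCast, ← mul_div_assoc, ← mul_div_assoc] at h
  have hs (x : ℝ) : Real.sinh x ≤ Real.exp x := by
    rw [← Real.cosh_add_sinh]
    linarith [Real.cosh_pos x]
  calc _ ≤ _ := h
    _ ≤ |a ^ 2 - 1| / 6 * (‖z‖ / N) ^ 2 * Real.exp (max 1 |a| * ‖z‖ / N) := by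
        gcongr
        exact hs _
    _ = _ := by
        field_simp
end

section
/- For every real number a, every integer N ≥ 1 and every z ∈ ℂ, one has |(cosh(z/N) + a·sinh(z/N))^N − e^{az}| ≤ (2/3)·(|a²−1|/N)·|z|²·exp((α+1)·|z|), where α := max(1, |a|). -/
/-!
With `w = z / N`, `t = ‖w‖` and `α = max 1 |a|`, put `A = cosh w + a sinh w` and `B = exp (a w)`,
so that the quantity to estimate is `A ^ N - B ^ N`. Comparing power series coefficientwise with
`cosh (α t) + sinh (α t) = exp (α t)` gives `‖A‖, ‖B‖ ≤ exp (α t)`. The same comparison, applied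
to `A - B = (cosh w - cosh (a w)) + (a sinh w - sinh (a w))`, whose coefficients contain the factor
`1 - a ^ (2 k)`, gives `‖A - B‖ ≤ |a ^ 2 - 1| t ^ 2 / 2 * exp (α t)`. The telescoping factorisation
of `A ^ N - B ^ N` then bounds its norm by `N * ‖A - B‖ * exp (α t) ^ (N - 1)`, which is at most
`|a ^ 2 - 1| / N * ‖z‖ ^ 2 / 2 * exp (α ‖z‖)`; this is stronger than the estimate claimed.
-/

theorem abs_pow_sub_one_le_aux (x b : ℝ) (hb : 1 ≤ b) (hx : |x| ≤ b) (k : ℕ) :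
    |x ^ (k + 1) - 1| ≤ |x - 1| * (k + 1) * b ^ k := by
  induction k with
  | zero => simp
  | succ k ih =>
    have e : x ^ (k + 1 + 1) - 1 = x * (x ^ (k + 1) - 1) + (x - 1) := by ring
    have h1 : |x * (x ^ (k + 1) - 1)| ≤ b * (|x - 1| * (k + 1) * b ^ k) := by
      rw [abs_mul]; gcongr
    have h2 : |x - 1| * 1 ≤ |x - 1| * b ^ (k + 1) := by
      gcongr; exact one_le_pow₀ hb
    rw [e]
    refine (abs_add_le _ _).trans ?_
    push_cast
    calc _ ≤ b * (|x - 1| * (k + 1) * b ^ k) + |x - 1| * b ^ (k + 1) := by linarith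
      _ = _ := by ring

theorem norm_pow_sub_pow_le_aux (A B : ℂ) (M : ℝ) (hA : ‖A‖ ≤ M) (hB : ‖B‖ ≤ M) (n : ℕ) :
    ‖A ^ (n + 1) - B ^ (n + 1)‖ ≤ (n + 1) * ‖A - B‖ * M ^ n := by
  have hM : 0 ≤ M := (norm_nonneg A).trans hA
  induction n with
  | zero => simp
  | succ n ih =>
    have e : A ^ (n + 1 + 1) - B ^ (n + 1 + 1)
        = A * (A ^ (n + 1) - B ^ (n + 1)) + (A - B) * B ^ (n + 1) := by ring
    have h1 : ‖A * (A ^ (n + 1) - B ^ (n + 1))‖ ≤ M * ((n + 1) * ‖A - B‖ * M ^ n) := by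
      rw [norm_mul]; gcongr
    have h2 : ‖(A - B) * B ^ (n + 1)‖ ≤ ‖A - B‖ * M ^ (n + 1) := by
      rw [norm_mul, norm_pow]; gcongr
    rw [e]
    refine (norm_add_le _ _).trans ((add_le_add h1 h2).trans (le_of_eq ?_))
    push_cast; ring

theorem norm_cosh_add_mul_sinh_le_aux (a α : ℝ) (h1 : 1 ≤ α) (ha : |a| ≤ α) (w : ℂ) :
    ‖Complex.cosh w + a * Complex.sinh w‖ ≤ Real.exp (α * ‖w‖) := by
  rw [← Real.cosh_add_sinh]
  refine (norm_add_le _ _).trans (add_le_add ?_ ?_)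
  · refine (Complex.hasSum_cosh w).norm_le_of_bounded (Real.hasSum_cosh (α * ‖w‖)) fun k => ?_
    rw [norm_div, norm_pow, Complex.norm_natCast]
    gcongr
    exact le_mul_of_one_le_left (norm_nonneg _) h1
  · refine ((Complex.hasSum_sinh w).mul_left (a : ℂ)).norm_le_of_bounded
      (Real.hasSum_sinh (α * ‖w‖)) fun k => ?_
    rw [norm_mul, norm_div, norm_pow, Complex.norm_natCast, Complex.norm_real, Real.norm_eq_abs,
      mul_pow, ← mul_div_assoc]
    gcongr
    exact ha.trans (le_self_pow₀ h1 (by omega))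

/-- The even part of the one-step error; the constant term of the series vanishes, so the series is
compared with that of `cosh (α * ‖w‖)` after a shift by one. -/
theorem norm_cosh_sub_cosh_le_aux (a α : ℝ) (h1 : 1 ≤ α) (ha : |a| ≤ α) (w : ℂ) :
    ‖Complex.cosh w - Complex.cosh (a * w)‖
      ≤ |a ^ 2 - 1| * ‖w‖ ^ 2 / 2 * Real.cosh (α * ‖w‖) := by
  have h := (hasSum_nat_add_iff' 1).2 ((Complex.hasSum_cosh w).sub (Complex.hasSum_cosh (a * w)))
  simp only [Finset.range_one, Finset.sum_singleton, mul_zero, pow_zero, sub_self, sub_zero] at h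
  refine h.norm_le_of_bounded ((Real.hasSum_cosh (α * ‖w‖)).mul_left _) fun k => ?_
  have hx : |a ^ 2| ≤ α ^ 2 := by rw [abs_pow]; gcongr
  have hp := abs_pow_sub_one_le_aux (a ^ 2) (α ^ 2) (one_le_pow₀ h1) hx k
  have e : w ^ (2 * (k + 1)) / ((2 * (k + 1)).factorial : ℂ)
      - (a * w) ^ (2 * (k + 1)) / ((2 * (k + 1)).factorial : ℂ)
      = -(((a ^ 2) ^ (k + 1) - 1 : ℝ) : ℂ) * w ^ (2 * (k + 1)) / ((2 * (k + 1)).factorial : ℂ) := by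
    push_cast; ring
  rw [e, norm_div, norm_mul, norm_neg, norm_pow, Complex.norm_natCast, Complex.norm_real,
    Real.norm_eq_abs]
  have hf : ((2 * (k + 1)).factorial : ℝ) = (2 * k + 2) * (2 * k + 1) * (2 * k).factorial := by
    rw [show 2 * (k + 1) = 2 * k + 1 + 1 by ring, Nat.factorial_succ, Nat.factorial_succ]
    push_cast; ring
  have hpos : (0 : ℝ) < (2 * k).factorial := by positivity
  rw [hf]
  calc _ ≤ |a ^ 2 - 1| * (k + 1) * (α ^ 2) ^ k * ‖w‖ ^ (2 * (k + 1))
          / ((2 * k + 2) * 1 * (2 * k).factorial) := by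
        gcongr
        have : (0 : ℝ) ≤ k := by positivity
        linarith
    _ = _ := by
        field_simp
        ring

/-- The odd part of the one-step error; the linear term of the series vanishes, so the series is
compared with that of `sinh (α * ‖w‖)` after a shift by one. -/
theorem norm_sinh_sub_sinh_le_aux (a α : ℝ) (h1 : 1 ≤ α) (ha : |a| ≤ α) (w : ℂ) :
    ‖a * Complex.sinh w - Complex.sinh (a * w)‖
      ≤ |a ^ 2 - 1| * ‖w‖ ^ 2 / 2 * Real.sinh (α * ‖w‖) := by
  have h := (hasSum_nat_add_iff' 1).2
    (((Complex.hasSum_sinh w).mul_left (a : ℂ)).sub (Complex.hasSum_sinh (a * w)))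
  simp only [Finset.range_one, Finset.sum_singleton, mul_zero, zero_add, pow_one,
    Nat.factorial_one, Nat.cast_one, div_one, sub_self, sub_zero] at h
  refine h.norm_le_of_bounded ((Real.hasSum_sinh (α * ‖w‖)).mul_left _) fun k => ?_
  have hx : |a ^ 2| ≤ α ^ 2 := by rw [abs_pow]; gcongr
  have hp := abs_pow_sub_one_le_aux (a ^ 2) (α ^ 2) (one_le_pow₀ h1) hx k
  have e : a * (w ^ (2 * (k + 1) + 1) / ((2 * (k + 1) + 1).factorial : ℂ))
      - (a * w) ^ (2 * (k + 1) + 1) / ((2 * (k + 1) + 1).factorial : ℂ)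
      = -(((a ^ 2) ^ (k + 1) - 1 : ℝ) : ℂ) * a * w ^ (2 * (k + 1) + 1)
        / ((2 * (k + 1) + 1).factorial : ℂ) := by
    push_cast; ring
  rw [e, norm_div, norm_mul, norm_mul, norm_neg, norm_pow, Complex.norm_natCast, Complex.norm_real,
    Complex.norm_real, Real.norm_eq_abs, Real.norm_eq_abs]
  have hf : ((2 * (k + 1) + 1).factorial : ℝ)
      = (2 * k + 2) * (2 * k + 3) * (2 * k + 1).factorial := by
    rw [show 2 * (k + 1) + 1 = 2 * k + 1 + 1 + 1 by ring, Nat.factorial_succ,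
      Nat.factorial_succ (2 * k + 1)]
    push_cast; ring
  have hpos : (0 : ℝ) < (2 * k + 1).factorial := by positivity
  rw [hf]
  calc _ ≤ |a ^ 2 - 1| * (k + 1) * (α ^ 2) ^ k * α * ‖w‖ ^ (2 * (k + 1) + 1)
          / ((2 * k + 2) * 1 * (2 * k + 1).factorial) := by
        gcongr
        have : (0 : ℝ) ≤ k := by positivity
        linarith
    _ = _ := by
        field_simp
        ring

theorem superoscillating_convergence_estimate (a : ℝ) (N : ℕ) (hN : 1 ≤ N) (z : ℂ) :
    ‖(Complex.cosh (z / N) + (a : ℂ) * Complex.sinh (z / N)) ^ N -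
        Complex.exp ((a : ℂ) * z)‖ ≤
      2 / 3 * (|a ^ 2 - 1| / N) * ‖z‖ ^ 2 * Real.exp ((max 1 |a| + 1) * ‖z‖) := by
  obtain ⟨n, rfl⟩ : ∃ n, N = n + 1 := ⟨N - 1, by omega⟩
  have h1 : 1 ≤ max 1 |a| := le_max_left _ _
  have ha : |a| ≤ max 1 |a| := le_max_right _ _
  generalize max 1 |a| = α at h1 ha ⊢
  have hn : ((n + 1 : ℕ) : ℂ) ≠ 0 := Nat.cast_ne_zero.2 (by omega)
  obtain ⟨w, rfl⟩ : ∃ w : ℂ, z = (n + 1 : ℕ) * w := ⟨z / (n + 1 : ℕ), by field_simp⟩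
  rw [mul_div_cancel_left₀ _ hn]
  have hB : ‖Complex.exp (a * w)‖ ≤ Real.exp (α * ‖w‖) := by
    refine (Complex.norm_exp_le_exp_norm _).trans ?_
    rw [norm_mul, Complex.norm_real, Real.norm_eq_abs]
    gcongr
  have hA := norm_cosh_add_mul_sinh_le_aux a α h1 ha w
  have hAB : ‖Complex.cosh w + a * Complex.sinh w - Complex.exp (a * w)‖
      ≤ |a ^ 2 - 1| * ‖w‖ ^ 2 / 2 * Real.exp (α * ‖w‖) := by
    rw [← Complex.cosh_add_sinh, ← Real.cosh_add_sinh, mul_add, add_sub_add_comm]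
    exact (norm_add_le _ _).trans (add_le_add (norm_cosh_sub_cosh_le_aux a α h1 ha w)
      (norm_sinh_sub_sinh_le_aux a α h1 ha w))
  have hexp : Complex.exp (a * ((n + 1 : ℕ) * w)) = Complex.exp (a * w) ^ (n + 1) := by
    rw [← Complex.exp_nat_mul]; congr 1; ring
  rw [hexp, norm_mul, Complex.norm_natCast]
  have hE : Real.exp (α * ‖w‖) ^ (n + 1) ≤ Real.exp ((α + 1) * ((n + 1 : ℕ) * ‖w‖)) := by
    rw [← Real.exp_nat_mul]
    apply Real.exp_le_exp.2
    have : 0 ≤ ((n + 1 : ℕ) : ℝ) * ‖w‖ := by positivity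
    linarith
  calc _ ≤ (n + 1) * ‖Complex.cosh w + a * Complex.sinh w - Complex.exp (a * w)‖
          * Real.exp (α * ‖w‖) ^ n := norm_pow_sub_pow_le_aux _ _ _ hA hB n
    _ ≤ (n + 1) * (|a ^ 2 - 1| * ‖w‖ ^ 2 / 2 * Real.exp (α * ‖w‖))
          * Real.exp (α * ‖w‖) ^ n := by gcongr
    _ = 1 / 2 * (|a ^ 2 - 1| / (n + 1 : ℕ)) * ((n + 1 : ℕ) * ‖w‖) ^ 2
          * Real.exp (α * ‖w‖) ^ (n + 1) := by
        have : (n : ℝ) + 1 ≠ 0 := by positivity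
        push_cast
        field_simp
        ring
    _ ≤ _ := by
        have : (1 / 2 : ℝ) ≤ 2 / 3 := by norm_num
        refine mul_le_mul ?_ hE (by positivity) (by positivity)
        exact mul_le_mul_of_nonneg_right (mul_le_mul_of_nonneg_right this (by positivity))
          (by positivity)
end

section
/- Let n ≥ 1 and let ℓ, t ∈ ℕⁿ be multi-indices. Then c(n, ℓ+t) ≤ (n−1)! · 2^{2n+|ℓ|+|t|−2} · c(n,ℓ) · c(n,t), where c(n,m) := (n+|m|−1)!/((n−1)!·m!) for a multi-index m. -/
/-!
With `N = n - 1`, `p = |ℓ|`, `q = |t|`, clearing the common factor `1 / N!` reduces the claim to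
`(N+p+q)! / (ℓ+t)! ≤ 2^(2N+p+q) (N+p)! (N+q)! / (ℓ! t!)`. For the numerators,
`(N+p+q)! ≤ ((N+p)+(N+q))!`, and `(j+k)! ≤ 2^(j+k) j! k!` because a binomial coefficient
`(j+k).choose j` is at most `2^(j+k)`. For the denominators, `ℓ! t! ≤ (ℓ+t)!` holds factor by factor.
-/

open Finset

lemma factorial_add_le_two_pow_mul (j k : ℕ) :
    (j + k).factorial ≤ 2 ^ (j + k) * (j.factorial * k.factorial) := by
  rw [← Nat.add_choose_mul_factorial_mul_factorial j k, mul_assoc]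
  exact Nat.mul_le_mul_right _ (Nat.choose_le_two_pow _ _)

theorem c_submultiplicative (n : ℕ) (hn : 1 ≤ n) (ℓ t : Fin n → ℕ)
    (c : (Fin n → ℕ) → ℝ)
    (hc : ∀ m : Fin n → ℕ, c m =
      (Nat.factorial (n + (∑ i, m i) - 1) : ℝ) /
        ((Nat.factorial (n - 1) : ℝ) * ∏ i, (Nat.factorial (m i) : ℝ))) :
    c (ℓ + t) ≤ (Nat.factorial (n - 1) : ℝ) *
      2 ^ (2 * n + (∑ i, ℓ i) + (∑ i, t i) - 2) * c ℓ * c t := by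
  have hprod : (∏ i, ((ℓ i).factorial : ℝ)) * ∏ i, ((t i).factorial : ℝ) ≤
      ∏ i, (((ℓ + t) i).factorial : ℝ) := by
    rw [← Finset.prod_mul_distrib]
    refine Finset.prod_le_prod (fun i _ => by positivity) fun i _ => ?_
    exact_mod_cast Nat.le_of_dvd (Nat.factorial_pos _)
      (Nat.factorial_mul_factorial_dvd_factorial_add (ℓ i) (t i))
  have hsum : ∑ i, (ℓ + t) i = ∑ i, ℓ i + ∑ i, t i := Finset.sum_add_distrib
  rw [hc, hc, hc, hsum]
  have hL : 0 < ∏ i, ((ℓ i).factorial : ℝ) := Finset.prod_pos fun i _ => by positivity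
  have hT : 0 < ∏ i, ((t i).factorial : ℝ) := Finset.prod_pos fun i _ => by positivity
  generalize (∏ i, ((ℓ i).factorial : ℝ)) = L at *
  generalize (∏ i, ((t i).factorial : ℝ)) = T at *
  generalize (∏ i, (((ℓ + t) i).factorial : ℝ)) = M at *
  generalize ∑ i, ℓ i = p
  generalize ∑ i, t i = q
  have hexp : 2 * n + p + q - 2 = (n + p - 1) + (n + q - 1) := by omega
  have hnum : ((n + (p + q) - 1).factorial : ℝ) ≤
      2 ^ (2 * n + p + q - 2) * ((n + p - 1).factorial * (n + q - 1).factorial) := by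
    rw [hexp]
    exact_mod_cast (Nat.factorial_le (by omega)).trans
      (factorial_add_le_two_pow_mul (n + p - 1) (n + q - 1))
  have hN : (0 : ℝ) < (n - 1).factorial := by positivity
  calc ((n + (p + q) - 1).factorial : ℝ) / ((n - 1).factorial * M)
      ≤ (2 ^ (2 * n + p + q - 2) * ((n + p - 1).factorial * (n + q - 1).factorial)) /
          ((n - 1).factorial * (L * T)) := by gcongr
    _ = _ := by field_simp
end

section
/- Let n ≥ 1. For every ε > 0 there exists K ∈ ℕ such that for every multi-index m ∈ ℕⁿ with |m| ≥ K one has c(n,m)/m! ≤ ε^{|m|}; in other words, (c(n,m)/m!)^{1/|m|} → 0 as |m| → ∞. -/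
/-!
Write `N = |m|`. The multinomial coefficient `N! / m!` is one of the nonnegative terms in the
expansion of `(1 + ⋯ + 1) ^ N = n ^ N`, so `1 / m! ≤ n ^ N / N!`; this is
`factorial_sum_le_pow_mul_prod`. Moreover `(n + N - 1)! / (n - 1)! = N! * (n + N - 1).choose N`
is at most `N! * 2 ^ (n + N - 1)`. As `m!` occurs twice in the denominator of `c m / m!`, one factor
`N!` survives there:
`c m / m! ≤ 2 ^ (n - 1) * (2 * n ^ 2) ^ N / N!`. A factorial beats every geometric sequence, so
`2 ^ (n - 1) * (2 * n ^ 2 / ε) ^ N / N! ≤ 1` for large `N`.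
-/

open Finset

theorem factorial_sum_le_pow_mul_prod {n : ℕ} (m : Fin n → ℕ) :
    (∑ i, m i).factorial ≤ n ^ (∑ i, m i) * ∏ i, (m i).factorial := by
  have h : Nat.multinomial univ m ≤ n ^ (∑ i, m i) := by
    have e := Finset.sum_pow_eq_sum_piAntidiag (univ : Finset (Fin n)) (fun _ => (1 : ℕ)) (∑ i, m i)
    simp only [sum_const, card_univ, Fintype.card_fin, smul_eq_mul, mul_one, one_pow,
      prod_const_one, Nat.cast_id] at e
    rw [e]
    exact single_le_sum (f := fun k => Nat.multinomial univ k) (fun _ _ => Nat.zero_le _)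
      (by simp)
  rw [← Nat.multinomial_spec univ m, mul_comm]
  exact Nat.mul_le_mul_right _ h

/-- With `k = n - 1`, this bounds the rising factorial `(n + N - 1)! / (n - 1)!`. -/
theorem factorial_add_le (k N : ℕ) :
    (k + N).factorial ≤ 2 ^ k * 2 ^ N * k.factorial * N.factorial := by
  rw [← Nat.add_choose_mul_factorial_mul_factorial k N, ← pow_add]
  gcongr
  exact Nat.choose_le_two_pow _ _

theorem c_over_factorial_root_tendsto_zero (n : ℕ) (hn : 1 ≤ n)
    (c : (Fin n → ℕ) → ℝ)
    (hc : ∀ m : Fin n → ℕ, c m =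
      (Nat.factorial (n + (∑ i, m i) - 1) : ℝ) /
        ((Nat.factorial (n - 1) : ℝ) * ∏ i, (Nat.factorial (m i) : ℝ))) :
    ∀ ε : ℝ, 0 < ε → ∃ K : ℕ, ∀ m : Fin n → ℕ, K ≤ ∑ i, m i →
      c m / ∏ i, (Nat.factorial (m i) : ℝ) ≤ ε ^ (∑ i, m i) := by
  intro ε hε
  have ht := (FloorSemiring.tendsto_pow_div_factorial_atTop (2 * (n : ℝ) ^ 2 / ε)).const_mul
    ((2 : ℝ) ^ (n - 1))
  rw [mul_zero] at ht
  obtain ⟨K, hK⟩ := Filter.eventually_atTop.1 (ht.eventually_le_const one_pos)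
  refine ⟨K, fun m hm => ?_⟩
  have h1 := hK _ hm
  have h2 : ((∑ i, m i).factorial : ℝ) ≤ (n : ℝ) ^ (∑ i, m i) * ∏ i, ((m i).factorial : ℝ) := by
    exact_mod_cast factorial_sum_le_pow_mul_prod m
  have h3 : ((n + (∑ i, m i) - 1).factorial : ℝ) ≤
      2 ^ (n - 1) * 2 ^ (∑ i, m i) * (n - 1).factorial * (∑ i, m i).factorial := by
    rw [show n + (∑ i, m i) - 1 = (n - 1) + ∑ i, m i by omega]
    exact_mod_cast factorial_add_le (n - 1) (∑ i, m i)
  have hP : (0 : ℝ) < ∏ i, ((m i).factorial : ℝ) :=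
    prod_pos fun i _ => by exact_mod_cast (m i).factorial_pos
  rw [hc]
  generalize (∏ i, ((m i).factorial : ℝ)) = P at *
  generalize (∑ i, m i) = N at *
  have hF : (0 : ℝ) < N.factorial := by exact_mod_cast N.factorial_pos
  have hk : (0 : ℝ) < (n - 1).factorial := by exact_mod_cast (n - 1).factorial_pos
  rw [div_pow, mul_pow, ← mul_div_assoc, ← mul_div_assoc, div_div, div_le_one (by positivity)] at h1
  rw [div_div, div_le_iff₀ (by positivity)]
  refine h3.trans ?_
  -- Multiplying by `N!` allows the bound on `N!` to be used twice, once for each factor `P`.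
  refine le_of_mul_le_mul_right ?_ hF
  calc 2 ^ (n - 1) * 2 ^ N * ((n - 1).factorial : ℝ) * N.factorial * N.factorial
      = 2 ^ (n - 1) * 2 ^ N * ((n - 1).factorial : ℝ) * (N.factorial * N.factorial) := by ring
    _ ≤ 2 ^ (n - 1) * 2 ^ N * ((n - 1).factorial : ℝ) * (((n : ℝ) ^ N * P) * ((n : ℝ) ^ N * P)) := by
        gcongr
    _ = (2 ^ (n - 1) * (2 ^ N * ((n : ℝ) ^ 2) ^ N)) * ((n - 1).factorial * P * P) := by ring
    _ ≤ (ε ^ N * N.factorial) * ((n - 1).factorial * P * P) := by gcongr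
    _ = ε ^ N * ((n - 1).factorial * P * P) * N.factorial := by ring
end

section
/- Let n ≥ 1. Then ((n+k−1)!/((n−1)!·(k!)²))^{1/k} → 0 as k → ∞. -/
/-!
The base of the root is `C(n+k-1, k) / k!`, and `C(n+k-1, k) ≤ 2 ^ (n+k-1)`, so Stirling's formula
can be avoided: for every `ε > 0`, the sequence `2 ^ (n-1) * (2 / ε) ^ k / k!` tends to `0`, since
factorials outgrow geometric sequences. Once it is below `1`, the base is less than `ε ^ k`,
and its `k`-th root is less than `ε`.
-/

open Filter

lemma fueter_coefficient_le (n k : ℕ) (hn : 1 ≤ n) :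
    (Nat.factorial (n + k - 1) : ℝ) /
        ((Nat.factorial (n - 1) : ℝ) * ((Nat.factorial k : ℝ)) ^ 2) ≤
      2 ^ (n - 1) * (2 ^ k / (Nat.factorial k : ℝ)) := by
  obtain ⟨m, rfl⟩ : ∃ m, n = m + 1 := ⟨n - 1, by omega⟩
  rw [show m + 1 + k - 1 = m + k by omega, Nat.add_sub_cancel]
  have h1 : ((m + k).choose k : ℝ) * m.factorial * k.factorial = (m + k).factorial := by
    exact_mod_cast Nat.add_choose_mul_factorial_mul_factorial m k
  have h2 : ((m + k).choose k : ℝ) ≤ 2 ^ (m + k) := by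
    exact_mod_cast Nat.choose_le_two_pow (m + k) k
  have hm : (0 : ℝ) < m.factorial := by exact_mod_cast m.factorial_pos
  have hk : (0 : ℝ) < k.factorial := by exact_mod_cast k.factorial_pos
  calc _ = ((m + k).choose k : ℝ) / k.factorial := by
        rw [← h1]; field_simp
    _ ≤ 2 ^ (m + k) / k.factorial := by gcongr
    _ = _ := by rw [pow_add]; ring

theorem root_fueter_coefficient_tendsto_zero (n : ℕ) (hn : 1 ≤ n) :
    Tendsto (fun k : ℕ =>
      ((Nat.factorial (n + k - 1) : ℝ) /
          ((Nat.factorial (n - 1) : ℝ) * ((Nat.factorial k : ℝ)) ^ 2)) ^ ((1 : ℝ) / k))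
      atTop (nhds 0) := by
  refine tendsto_order.2 ⟨fun a ha => Eventually.of_forall fun k => ha.trans_le (by positivity),
    fun ε hε => ?_⟩
  have h := (FloorSemiring.tendsto_pow_div_factorial_atTop (2 / ε)).const_mul ((2 : ℝ) ^ (n - 1))
  rw [mul_zero] at h
  filter_upwards [h.eventually_lt_const one_pos, eventually_ge_atTop 1] with k hk hk1
  have hk0 : k ≠ 0 := by omega
  have hlt : (2 : ℝ) ^ (n - 1) * (2 ^ k / (Nat.factorial k : ℝ)) < ε ^ k := by
    calc _ = (2 : ℝ) ^ (n - 1) * ((2 / ε) ^ k / (Nat.factorial k : ℝ)) * ε ^ k := by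
          rw [div_pow]; field_simp
      _ < 1 * ε ^ k := by gcongr
      _ = ε ^ k := one_mul _
  calc _ < (ε ^ k) ^ ((1 : ℝ) / k) :=
        Real.rpow_lt_rpow (by positivity) ((fueter_coefficient_le n k hn).trans_lt hlt)
          (by positivity)
    _ = ε := by rw [one_div, Real.pow_rpow_inv_natCast hε.le hk0]
end

section
/- Let d ≥ 1, let F be a real normed vector space, and let (f_N) be a sequence of continuous functions from ℝ^d (with the Euclidean norm) to F. The following are equivalent: (i) there exists σ > 0 such that for every N the quantity ‖f_N‖_{1,σ} := sup_{x ∈ ℝ^d} ‖f_N(x)‖·e^{−σ‖x‖} is finite and ‖f_N‖_{1,σ} → 0 as N → ∞; (ii) f_N → 0 uniformly on every compact subset of ℝ^d, and there exist constants A ≥ 0 and B ≥ 0 such that ‖f_N(x)‖ ≤ A·e^{B‖x‖} for all N and all x ∈ ℝ^d. -/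
/-!
The weighted sup-norm with exponent `σ` is at least `exp (-σ R)` times the sup-norm on the ball of
radius `R`, so weighted convergence forces locally uniform convergence; the norms of the tail are
bounded by `1` and the finitely many remaining ones are finite, which gives the common exponential
bound with `B = σ`. Conversely, a common bound `A * exp (B ‖x‖)` is weakened to the exponent
`σ = B + 1`: outside a ball of large radius `R` the weighted functions are at most `A * exp (-R)`,
uniformly in `N`, and on the compact ball they tend to `0` uniformly.
-/

open Filter

theorem A1_convergence_characterization (d : ℕ) (hd : 1 ≤ d)
    (F : Type*) [NormedAddCommGroup F] [NormedSpace ℝ F]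
    (f : ℕ → EuclideanSpace ℝ (Fin d) → F) (hf : ∀ N, Continuous (f N)) :
    ((∃ σ : ℝ, 0 < σ ∧
        (∀ N, ∃ M : ℝ, ∀ x, ‖f N x‖ * Real.exp (-σ * ‖x‖) ≤ M) ∧
        (∀ ε : ℝ, 0 < ε → ∃ N₀ : ℕ, ∀ N, N₀ ≤ N →
          ∀ x, ‖f N x‖ * Real.exp (-σ * ‖x‖) ≤ ε)) ↔
      ((∀ K : Set (EuclideanSpace ℝ (Fin d)), IsCompact K →
          TendstoUniformlyOn f 0 atTop K) ∧
        ∃ A B : ℝ, 0 ≤ A ∧ 0 ≤ B ∧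
          ∀ N, ∀ x, ‖f N x‖ ≤ A * Real.exp (B * ‖x‖))) := by
  constructor
  · rintro ⟨σ, hσ, hM, hε⟩
    have key : ∀ {N : ℕ} {x : EuclideanSpace ℝ (Fin d)} {c : ℝ},
        ‖f N x‖ * Real.exp (-σ * ‖x‖) ≤ c → ‖f N x‖ ≤ c * Real.exp (σ * ‖x‖) := by
      intro N x c h
      rwa [neg_mul, Real.exp_neg, ← div_eq_mul_inv, div_le_iff₀ (Real.exp_pos _)] at h
    refine ⟨fun K hK => ?_, ?_⟩
    · obtain ⟨R, hR⟩ := hK.isBounded.exists_norm_le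
      rw [Metric.tendstoUniformlyOn_iff]
      intro ε hε0
      obtain ⟨N₀, hN₀⟩ := hε (ε / 2 * Real.exp (-(σ * R))) (by positivity)
      filter_upwards [eventually_ge_atTop N₀] with N hN x hx
      rw [Pi.zero_apply, dist_zero_left]
      calc ‖f N x‖ ≤ ε / 2 * Real.exp (-(σ * R)) * Real.exp (σ * ‖x‖) := key (hN₀ N hN x)
        _ ≤ ε / 2 * Real.exp (-(σ * R)) * Real.exp (σ * R) := by
          gcongr
          exact hR x hx
        _ = ε / 2 := by rw [mul_assoc, ← Real.exp_add, neg_add_cancel, Real.exp_zero, mul_one]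
        _ < ε := half_lt_self hε0
    · choose M hM using hM
      obtain ⟨N₀, hN₀⟩ := hε 1 one_pos
      have hsum : 0 ≤ ∑ n ∈ Finset.range N₀, |M n| := Finset.sum_nonneg fun _ _ => abs_nonneg _
      refine ⟨1 + ∑ n ∈ Finset.range N₀, |M n|, σ, by positivity, hσ.le, fun N x => key ?_⟩
      rcases le_or_gt N₀ N with hN | hN
      · linarith [hN₀ N hN x]
      · have h1 : |M N| ≤ ∑ n ∈ Finset.range N₀, |M n| :=
          Finset.single_le_sum (f := fun n => |M n|) (fun _ _ => abs_nonneg _)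
            (Finset.mem_range.2 hN)
        linarith [hM N x, le_abs_self (M N)]
  · rintro ⟨hK, A, B, hA, hB, hAB⟩
    have key : ∀ N x, ‖f N x‖ * Real.exp (-(B + 1) * ‖x‖) ≤ A * Real.exp (-‖x‖) := by
      intro N x
      calc ‖f N x‖ * Real.exp (-(B + 1) * ‖x‖)
          ≤ A * Real.exp (B * ‖x‖) * Real.exp (-(B + 1) * ‖x‖) := by
            gcongr
            exact hAB N x
        _ = A * Real.exp (-‖x‖) := by
            rw [mul_assoc, ← Real.exp_add]
            ring_nf
    refine ⟨B + 1, by positivity, fun N => ⟨A, fun x => (key N x).trans ?_⟩, fun ε hε => ?_⟩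
    · exact mul_le_of_le_one_right hA (Real.exp_le_one_iff.2 (by simp))
    · -- The radius `A / ε` suffices, since `exp R ≥ R + 1`.
      have hball := Metric.tendstoUniformlyOn_iff.1
        (hK _ (isCompact_closedBall 0 (A / ε))) ε hε
      obtain ⟨N₀, hN₀⟩ := eventually_atTop.1 hball
      refine ⟨N₀, fun N hN x => ?_⟩
      rcases le_or_gt ‖x‖ (A / ε) with hx | hx
      · have h1 := hN₀ N hN x (mem_closedBall_zero_iff.2 hx)
        rw [Pi.zero_apply, dist_zero_left] at h1
        refine (mul_le_of_le_one_right (norm_nonneg _) (Real.exp_le_one_iff.2 ?_)).trans h1.le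
        rw [neg_mul, neg_nonpos]
        positivity
      · refine (key N x).trans ?_
        rw [Real.exp_neg, ← div_eq_mul_inv, div_le_iff₀ (Real.exp_pos _)]
        have h1 : A ≤ ‖x‖ * ε := ((div_lt_iff₀ hε).1 hx).le
        nlinarith [Real.add_one_le_exp ‖x‖]
end

section
/- Let C ≥ 0, b ≥ 0, let (α_ℓ)_{ℓ≥0} be real numbers with 0 ≤ α_ℓ ≤ C·b^ℓ/ℓ! for all ℓ, let (γ_s)_{s≥0} be nonnegative real numbers, and let x ≥ 0, y ≥ 0 be real numbers such that T := Σ_{s=0}^∞ (b·x)^s·γ_s converges. Then for each s the series Σ_{ℓ=0}^∞ ((ℓ+s)!/ℓ!)·α_{ℓ+s}·y^ℓ converges, and Σ_{s=0}^∞ (Σ_{ℓ=0}^∞ ((ℓ+s)!/ℓ!)·α_{ℓ+s}·y^ℓ)·x^s·γ_s ≤ C·e^{b·y}·T. -/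
/-!
The factor `(ℓ + s)!` cancels the factorial in the bound on `α (ℓ + s)`, so the `(s, ℓ)` term of the
inner series is at most `C * b ^ s * ((b * y) ^ ℓ / ℓ!)`. Comparison with the exponential series
bounds the inner sum by `C * b ^ s * exp (b * y)`, and a second comparison, with the multiple
`C * exp (b * y)` of the series of `(b * x) ^ s * γ s`, gives both the convergence and the bound of
the outer series.
-/

theorem infinite_order_operator_estimate
    (C b : ℝ) (hC : 0 ≤ C) (hb : 0 ≤ b)
    (α : ℕ → ℝ) (hα : ∀ ℓ, 0 ≤ α ℓ ∧ α ℓ ≤ C * b ^ ℓ / Nat.factorial ℓ)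
    (γ : ℕ → ℝ) (hγ : ∀ s, 0 ≤ γ s)
    (x y : ℝ) (hx : 0 ≤ x) (hy : 0 ≤ y)
    (hT : Summable fun s : ℕ => (b * x) ^ s * γ s) :
    (∀ s : ℕ, Summable fun ℓ : ℕ =>
        ((Nat.factorial (ℓ + s) : ℝ) / Nat.factorial ℓ) * α (ℓ + s) * y ^ ℓ) ∧
      (∑' s : ℕ, (∑' ℓ : ℕ,
          ((Nat.factorial (ℓ + s) : ℝ) / Nat.factorial ℓ) * α (ℓ + s) * y ^ ℓ) * x ^ s * γ s) ≤
        C * Real.exp (b * y) * ∑' s : ℕ, (b * x) ^ s * γ s := by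
  have term_nonneg (s ℓ : ℕ) :
      0 ≤ ((Nat.factorial (ℓ + s) : ℝ) / Nat.factorial ℓ) * α (ℓ + s) * y ^ ℓ := by
    have := (hα (ℓ + s)).1
    positivity
  have term_le (s ℓ : ℕ) :
      ((Nat.factorial (ℓ + s) : ℝ) / Nat.factorial ℓ) * α (ℓ + s) * y ^ ℓ ≤
        C * b ^ s * ((b * y) ^ ℓ / Nat.factorial ℓ) := by
    have h_fac : (Nat.factorial (ℓ + s) : ℝ) ≠ 0 := by positivity
    calc ((Nat.factorial (ℓ + s) : ℝ) / Nat.factorial ℓ) * α (ℓ + s) * y ^ ℓ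
        ≤ ((Nat.factorial (ℓ + s) : ℝ) / Nat.factorial ℓ) *
            (C * b ^ (ℓ + s) / Nat.factorial (ℓ + s)) * y ^ ℓ := by
          gcongr
          exact (hα (ℓ + s)).2
      _ = C * b ^ s * ((b * y) ^ ℓ / Nat.factorial ℓ) := by
          rw [pow_add, mul_pow]
          field_simp
  have exp_series (s : ℕ) : HasSum (fun ℓ : ℕ => C * b ^ s * ((b * y) ^ ℓ / Nat.factorial ℓ))
      (C * b ^ s * Real.exp (b * y)) := by
    rw [Real.exp_eq_exp_ℝ]
    exact (NormedSpace.expSeries_div_hasSum_exp (b * y)).mul_left _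
  have inner_summable (s : ℕ) : Summable fun ℓ : ℕ =>
      ((Nat.factorial (ℓ + s) : ℝ) / Nat.factorial ℓ) * α (ℓ + s) * y ^ ℓ :=
    .of_nonneg_of_le (term_nonneg s) (term_le s) (exp_series s).summable
  refine ⟨inner_summable, ?_⟩
  have outer_le (s : ℕ) :
      (∑' ℓ : ℕ, ((Nat.factorial (ℓ + s) : ℝ) / Nat.factorial ℓ) * α (ℓ + s) * y ^ ℓ)
          * x ^ s * γ s ≤ C * Real.exp (b * y) * ((b * x) ^ s * γ s) := by
    have h_inner := hasSum_le (term_le s) (inner_summable s).hasSum (exp_series s)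
    have h_weight : 0 ≤ x ^ s * γ s := mul_nonneg (pow_nonneg hx s) (hγ s)
    calc _ = _ * (x ^ s * γ s) := mul_assoc _ _ _
      _ ≤ C * b ^ s * Real.exp (b * y) * (x ^ s * γ s) :=
          mul_le_mul_of_nonneg_right h_inner h_weight
      _ = C * Real.exp (b * y) * ((b * x) ^ s * γ s) := by rw [mul_pow]; ring
  have outer_nonneg (s : ℕ) :
      0 ≤ (∑' ℓ : ℕ, ((Nat.factorial (ℓ + s) : ℝ) / Nat.factorial ℓ) * α (ℓ + s) * y ^ ℓ)
          * x ^ s * γ s :=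
    mul_nonneg (mul_nonneg (tsum_nonneg (term_nonneg s)) (pow_nonneg hx s)) (hγ s)
  have major := hT.mul_left (C * Real.exp (b * y))
  rw [← tsum_mul_left]
  exact Summable.tsum_le_tsum outer_le (.of_nonneg_of_le outer_nonneg outer_le major) major
end

section
/- Let C ≥ 0, b ≥ 0, let (α_ℓ)_{ℓ≥0} be real numbers with 0 ≤ α_ℓ ≤ C·b^ℓ/ℓ! for all ℓ, let (u_t)_{t≥0} be nonnegative real numbers such that S := Σ_{t=0}^∞ b^t·u_t converges, and let y ≥ 0. Then Σ_{k=0}^∞ (1/k!)·Σ_{s=0}^∞ (Σ_{ℓ=0}^∞ ((ℓ+s)!/ℓ!)·α_{ℓ+s}·y^ℓ)·(Σ_{(t₁,…,t_k) ∈ ℕ^k, t₁+⋯+t_k = s} u_{t₁}·⋯·u_{t_k}) ≤ C·e^{b·y}·e^{S}. -/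
open Finset

/-!
Each factor is dominated separately. From `α (ℓ + s) ≤ C b^(ℓ+s) / (ℓ+s)!` the `s`-th derivative
series is bounded termwise by `C b^s (b y)^ℓ / ℓ!`, hence by `C b^s e^(b y)`
(`derivative_series_bounds`). When `t₁ + ⋯ + t_k = s`, the factor `b^s` distributes over the product
as `b^t₁ ⋯ b^t_k`, so the sum over `s` is bounded by `C e^(b y)` times the sum of the `k`-fold Cauchy
power of `t ↦ b^t u_t`, which is `S^k` (`hasSum_antidiagonalTuple_prod`). Weighting by `1/k!` and
summing over `k` gives `e^S`. All terms are nonnegative, so every intermediate series converges by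
comparison.
-/

theorem hasSum_real_exp (x : ℝ) : HasSum (fun n : ℕ => x ^ n / (Nat.factorial n : ℝ)) (Real.exp x) := by
  rw [Real.exp_eq_exp_ℝ]
  exact NormedSpace.expSeries_div_hasSum_exp x

theorem tsum_le_of_nonneg_of_le_hasSum {f g : ℕ → ℝ} {B : ℝ} (hf : ∀ n, 0 ≤ f n)
    (hfg : ∀ n, f n ≤ g n) (hg : HasSum g B) : ∑' n, f n ≤ B :=
  hasSum_le hfg (Summable.of_nonneg_of_le hf hfg hg.summable).hasSum hg

/-- Splitting off the first coordinate: the `(k+1)`-fold Cauchy power is the Cauchy product of `f`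
with its `k`-fold Cauchy power. -/
theorem sum_antidiagonalTuple_succ_prod (f : ℕ → ℝ) (k s : ℕ) :
    ∑ t ∈ Finset.Nat.antidiagonalTuple (k + 1) s, ∏ i, f (t i) =
      ∑ p ∈ antidiagonal s, f p.1 * ∑ t ∈ Finset.Nat.antidiagonalTuple k p.2, ∏ i, f (t i) := by
  simp_rw [Finset.mul_sum]
  rw [Finset.sum_sigma']
  refine Finset.sum_bij' (fun t _ => ⟨(t 0, ∑ i, Fin.tail t i), Fin.tail t⟩)
    (fun q _ => Fin.cons q.1.1 q.2) ?_ ?_ ?_ ?_ ?_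
  · intro t ht
    rw [Finset.Nat.mem_antidiagonalTuple, Fin.sum_univ_succ] at ht
    simpa [Finset.Nat.mem_antidiagonalTuple, Fin.tail] using ht
  · rintro ⟨⟨a, c⟩, t⟩ hq
    simp only [Finset.mem_sigma, HasAntidiagonal.mem_antidiagonal, Finset.Nat.mem_antidiagonalTuple] at hq
    simp [Finset.Nat.mem_antidiagonalTuple, Fin.sum_univ_succ, hq.1, hq.2]
  · intro t _
    exact Fin.cons_self_tail t
  · rintro ⟨⟨a, c⟩, t⟩ hq
    simp only [Finset.mem_sigma, HasAntidiagonal.mem_antidiagonal, Finset.Nat.mem_antidiagonalTuple] at hq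
    obtain ⟨-, rfl⟩ := hq
    simp
  · intro t _
    simp [Fin.prod_univ_succ, Fin.tail]

/-- The `k`-fold Cauchy power of a convergent nonnegative series sums to the `k`-th power of its
sum. -/
theorem hasSum_antidiagonalTuple_prod {f : ℕ → ℝ} (hf : ∀ t, 0 ≤ f t) (hs : Summable f) (k : ℕ) :
    HasSum (fun s => ∑ t ∈ Finset.Nat.antidiagonalTuple k s, ∏ i, f (t i)) ((∑' t, f t) ^ k) := by
  induction k with
  | zero =>
    convert! hasSum_ite_eq (0 : ℕ) (1 : ℝ) using 2 with s
    · cases s <;> simp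
  | succ k ih =>
    have hn : ∀ s, 0 ≤ ∑ t ∈ Finset.Nat.antidiagonalTuple k s, ∏ i, f (t i) := fun s =>
      Finset.sum_nonneg fun t _ => Finset.prod_nonneg fun i _ => hf _
    have h1 : Summable fun t => ‖f t‖ := by simpa only [Real.norm_of_nonneg (hf _)] using hs
    have h2 : Summable fun s => ‖∑ t ∈ Finset.Nat.antidiagonalTuple k s, ∏ i, f (t i)‖ := by
      simpa only [Real.norm_of_nonneg (hn _)] using ih.summable
    simp_rw [sum_antidiagonalTuple_succ_prod]
    rw [pow_succ', ← ih.tsum_eq, tsum_mul_tsum_eq_tsum_sum_antidiagonal_of_summable_norm h1 h2]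
    exact (summable_sum_mul_antidiagonal_of_summable_norm' h1 hs h2 ih.summable).hasSum

/-- The series is the value at `y` of the `s`-th derivative of `∑ α_ℓ y^ℓ`; it is dominated by the
`s`-th derivative of `C e^(b y)`. -/
theorem derivative_series_bounds {C b : ℝ} {α : ℕ → ℝ}
    (hα : ∀ ℓ, 0 ≤ α ℓ ∧ α ℓ ≤ C * b ^ ℓ / Nat.factorial ℓ) {y : ℝ} (hy : 0 ≤ y) (s : ℕ) :
    0 ≤ ∑' ℓ : ℕ, ((Nat.factorial (ℓ + s) : ℝ) / Nat.factorial ℓ) * α (ℓ + s) * y ^ ℓ ∧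
      ∑' ℓ : ℕ, ((Nat.factorial (ℓ + s) : ℝ) / Nat.factorial ℓ) * α (ℓ + s) * y ^ ℓ ≤
        C * b ^ s * Real.exp (b * y) := by
  have h0 : ∀ ℓ : ℕ,
      0 ≤ ((Nat.factorial (ℓ + s) : ℝ) / Nat.factorial ℓ) * α (ℓ + s) * y ^ ℓ := fun ℓ => by
    have := (hα (ℓ + s)).1
    positivity
  refine ⟨tsum_nonneg h0, tsum_le_of_nonneg_of_le_hasSum h0 (fun ℓ => ?_)
    ((hasSum_real_exp (b * y)).mul_left (C * b ^ s))⟩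
  have hne : (Nat.factorial (ℓ + s) : ℝ) ≠ 0 := by positivity
  calc ((Nat.factorial (ℓ + s) : ℝ) / Nat.factorial ℓ) * α (ℓ + s) * y ^ ℓ
      ≤ ((Nat.factorial (ℓ + s) : ℝ) / Nat.factorial ℓ) *
          (C * b ^ (ℓ + s) / Nat.factorial (ℓ + s)) * y ^ ℓ := by
        gcongr
        exact (hα (ℓ + s)).2
    _ = C * b ^ s * ((b * y) ^ ℓ / Nat.factorial ℓ) := by
        rw [mul_pow, pow_add]
        field_simp

theorem infinite_order_operator_estimate_several_variables
    (C b : ℝ) (hC : 0 ≤ C) (hb : 0 ≤ b)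
    (α : ℕ → ℝ) (hα : ∀ ℓ, 0 ≤ α ℓ ∧ α ℓ ≤ C * b ^ ℓ / Nat.factorial ℓ)
    (u : ℕ → ℝ) (hu : ∀ t, 0 ≤ u t)
    (hS : Summable fun t : ℕ => b ^ t * u t)
    (y : ℝ) (hy : 0 ≤ y) :
    (∀ k : ℕ, ∑' s : ℕ,
        ∑ t ∈ Finset.Nat.antidiagonalTuple k s, ∏ i, b ^ t i * u (t i) =
        (∑' t : ℕ, b ^ t * u t) ^ k) ∧
      (∑' k : ℕ, (1 / (Nat.factorial k : ℝ)) *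
          ∑' s : ℕ, (∑' ℓ : ℕ,
              ((Nat.factorial (ℓ + s) : ℝ) / Nat.factorial ℓ) * α (ℓ + s) * y ^ ℓ) *
            ∑ t ∈ Finset.Nat.antidiagonalTuple k s, ∏ i, u (t i)) ≤
        C * Real.exp (b * y) * Real.exp (∑' t : ℕ, b ^ t * u t) := by
  have hf : ∀ t, 0 ≤ b ^ t * u t := fun t => mul_nonneg (pow_nonneg hb t) (hu t)
  have key := hasSum_antidiagonalTuple_prod hf hS
  refine ⟨fun k => (key k).tsum_eq, ?_⟩
  have hU : ∀ k s, 0 ≤ ∑ t ∈ Finset.Nat.antidiagonalTuple k s, ∏ i, u (t i) := fun k s =>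
    Finset.sum_nonneg fun t _ => Finset.prod_nonneg fun i _ => hu _
  have hpow : ∀ k s, b ^ s * ∑ t ∈ Finset.Nat.antidiagonalTuple k s, ∏ i, u (t i) =
      ∑ t ∈ Finset.Nat.antidiagonalTuple k s, ∏ i, b ^ t i * u (t i) := fun k s => by
    rw [Finset.mul_sum]
    refine Finset.sum_congr rfl fun t ht => ?_
    rw [Finset.prod_mul_distrib, Finset.prod_pow_eq_pow_sum,
      Finset.Nat.mem_antidiagonalTuple.1 ht]
  have hterm := fun k s => mul_nonneg (derivative_series_bounds hα hy s).1 (hU k s)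
  refine tsum_le_of_nonneg_of_le_hasSum
    (fun k => mul_nonneg (by positivity) (tsum_nonneg (hterm k))) (fun k => ?_)
    ((hasSum_real_exp (∑' t : ℕ, b ^ t * u t)).mul_left (C * Real.exp (b * y)))
  have hk := tsum_le_of_nonneg_of_le_hasSum (hterm k) (fun s => ?_)
    ((key k).mul_left (C * Real.exp (b * y)))
  · refine (mul_le_mul_of_nonneg_left hk (by positivity)).trans_eq ?_
    ring
  · refine (mul_le_mul_of_nonneg_right (derivative_series_bounds hα hy s).2
      (hU k s)).trans_eq ?_
    rw [← hpow]
    ring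
end

section
/- Let a ∈ ℝ. For each N ∈ ℕ let J_N ∈ ℕ, let Z_j(N) ∈ ℂ and h_j(N) ∈ ℝ for 0 ≤ j ≤ J_N, and set f_N(z) := Σ_{j=0}^{J_N} Z_j(N)·e^{h_j(N)·z} for z ∈ ℂ. Assume that f_N converges to z ↦ e^{az} uniformly on every compact subset of ℂ, and that there exist constants A ≥ 0, B ≥ 0 with |f_N(z)| ≤ A·e^{B|z|} for all N and all z ∈ ℂ. Then for every entire function G : ℂ → ℂ, the sequence F_N(z) := Σ_{j=0}^{J_N} Z_j(N)·G(h_j(N)·z) converges to z ↦ G(a·z) uniformly on every compact subset of ℂ. -/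
/-!
The sum `∑ j, Z N j * h N j ^ n` is both the `n`-th derivative of `f N` at `0` and the factor that
multiplies `c n * z ^ n` in `∑ j, Z N j * G (h N j * z)`, where `c n` are the Taylor coefficients
of `G` at `0`. Write `m N n` for it. On `‖z‖ ≤ R` the error is therefore at most
`∑' n, ‖c n‖ * R ^ n * ‖m N n - a ^ n‖`, which does not depend on `z`.

Each term tends to `0`: Cauchy's estimate on the unit circle turns the uniform convergence of `f N`
into `m N n → a ^ n` (`tendsto_moment`). The exponential bound, through Cauchy's estimate on the
circle of radius `n`, gives `‖m N n‖ ≤ A * exp B ^ n` uniformly in `N` (`norm_moment_le`), so the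
terms are dominated by `‖c n‖ * R ^ n * (A * exp B ^ n + |a| ^ n)`, a summable sequence because the
Taylor series of `G` converges absolutely everywhere. Dominated convergence for series finishes
the proof.
-/

open Filter Finset

/-- The exponential sum with coefficients `Z` and frequencies `h`, over a finite index set. -/
noncomputable def expSum (s : Finset ℕ) (Z h : ℕ → ℂ) (z : ℂ) : ℂ := ∑ j ∈ s, Z j * Complex.exp (h j * z)

lemma differentiable_expSum (s : Finset ℕ) (Z h : ℕ → ℂ) : Differentiable ℂ (expSum s Z h) := by
  unfold expSum
  fun_prop

lemma iteratedDeriv_expSum_zero (s : Finset ℕ) (Z h : ℕ → ℂ) (n : ℕ) :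
    iteratedDeriv n (expSum s Z h) 0 = ∑ j ∈ s, Z j * h j ^ n := by
  unfold expSum
  rw [iteratedDeriv_fun_sum (fun j _ => by fun_prop)]
  refine Finset.sum_congr rfl fun j _ => ?_
  rw [iteratedDeriv_const_mul_field, iteratedDeriv_cexp_const_mul]
  simp

/-- The moments of an exponential sum of exponential type grow at most geometrically. -/
lemma norm_moment_le (s : Finset ℕ) (Z h : ℕ → ℂ) {A B : ℝ} (hA : 0 ≤ A)
    (hb : ∀ z, ‖expSum s Z h z‖ ≤ A * Real.exp (B * ‖z‖)) (n : ℕ) :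
    ‖∑ j ∈ s, Z j * h j ^ n‖ ≤ A * Real.exp B ^ n := by
  rcases Nat.eq_zero_or_pos n with rfl | hn
  · simpa [expSum] using hb 0
  have hn' : (0 : ℝ) < n := by exact_mod_cast hn
  -- The radius `n` makes `n ! / n ^ n ≤ 1` absorb the factorial in Cauchy's estimate.
  have key := Complex.norm_iteratedDeriv_le_of_forall_mem_sphere_norm_le (c := 0) (R := n)
    (C := A * Real.exp B ^ n) n hn' (differentiable_expSum s Z h).diffContOnCl
    (fun z hz => by
      have := hb z
      rw [mem_sphere_zero_iff_norm.1 hz, mul_comm B, Real.exp_nat_mul] at this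
      exact this)
  rw [iteratedDeriv_expSum_zero] at key
  refine key.trans ?_
  rw [div_le_iff₀ (by positivity), mul_comm]
  gcongr
  exact_mod_cast Nat.factorial_le_pow n

lemma tendsto_moment (s : ℕ → Finset ℕ) (Z h : ℕ → ℕ → ℂ) (a : ℂ)
    (hconv : TendstoUniformlyOn (fun N => expSum (s N) (Z N) (h N))
      (fun z => Complex.exp (a * z)) atTop (Metric.sphere 0 1)) (n : ℕ) :
    Tendsto (fun N => ∑ j ∈ s N, Z N j * h N j ^ n) atTop (nhds (a ^ n)) := by
  rw [Metric.tendsto_nhds]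
  intro ε hε
  have hfac : (0 : ℝ) < n.factorial := by positivity
  filter_upwards [Metric.tendstoUniformlyOn_iff.1 hconv (ε / (2 * n.factorial)) (by positivity)]
    with N hN
  have hdiff := differentiable_expSum (s N) (Z N) (h N)
  have hexp : Differentiable ℂ (fun z => Complex.exp (a * z)) := by fun_prop
  have key := Complex.norm_iteratedDeriv_le_of_forall_mem_sphere_norm_le (c := 0) (R := 1)
    (C := ε / (2 * n.factorial)) n one_pos (hdiff.sub hexp).diffContOnCl
    (fun z hz => by
      have := hN z hz
      rw [dist_comm, dist_eq_norm] at this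
      exact this.le)
  rw [iteratedDeriv_sub hdiff.contDiff.contDiffAt hexp.contDiff.contDiffAt,
    iteratedDeriv_expSum_zero, iteratedDeriv_cexp_const_mul] at key
  rw [dist_eq_norm]
  have h2 : (n.factorial : ℝ) * (ε / (2 * n.factorial)) / 1 ^ n = ε / 2 := by
    field_simp
    simp
  rw [h2] at key
  simp only [mul_zero, Complex.exp_zero, mul_one] at key
  linarith

theorem supershift_complex_slice (a : ℝ)
    (J : ℕ → ℕ) (Z : ℕ → ℕ → ℂ) (h : ℕ → ℕ → ℝ)
    (f : ℕ → ℂ → ℂ)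
    (hf : ∀ N z, f N z =
      ∑ j ∈ Finset.range (J N + 1), Z N j * Complex.exp ((h N j : ℂ) * z))
    (hconv : ∀ K : Set ℂ, IsCompact K →
      TendstoUniformlyOn f (fun z => Complex.exp ((a : ℂ) * z)) atTop K)
    (A B : ℝ) (hA : 0 ≤ A) (hB : 0 ≤ B)
    (hbound : ∀ N z, ‖f N z‖ ≤ A * Real.exp (B * ‖z‖))
    (G : ℂ → ℂ) (hG : Differentiable ℂ G) :
    ∀ K : Set ℂ, IsCompact K →
      TendstoUniformlyOn
        (fun N z => ∑ j ∈ Finset.range (J N + 1), Z N j * G ((h N j : ℂ) * z))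
        (fun z => G ((a : ℂ) * z)) atTop K := by
  intro K hK
  have hfe : f = fun N => expSum (range (J N + 1)) (Z N) (fun j => (h N j : ℂ)) := by
    funext N z
    exact hf N z
  subst hfe
  obtain ⟨R, hR0, hR⟩ := hK.isBounded.exists_pos_norm_le
  set c : ℕ → ℂ := fun n => (n.factorial : ℂ)⁻¹ * iteratedDeriv n G 0 with hc
  have hsum (w : ℂ) : HasSum (fun n => c n * w ^ n) (G w) := by
    convert! Complex.hasSum_taylorSeries_of_entire hG 0 w using 2 with n
    simp only [hc, smul_eq_mul, sub_zero]
    ring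
  have habs (r : ℝ) (hr : 0 ≤ r) : Summable (fun n => ‖c n‖ * r ^ n) := by
    have := (hsum (r : ℂ)).summable.norm
    simpa [abs_of_nonneg hr] using this
  set m : ℕ → ℕ → ℂ := fun N n => ∑ j ∈ range (J N + 1), Z N j * (h N j : ℂ) ^ n with hm
  have hmb (N n : ℕ) : ‖m N n‖ ≤ A * Real.exp B ^ n := norm_moment_le _ _ _ hA (hbound N) n
  have hmt (n : ℕ) : Tendsto (fun N => m N n) atTop (nhds ((a : ℂ) ^ n)) :=
    tendsto_moment _ _ _ _ (hconv _ (isCompact_sphere 0 1)) n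
  have hF (N : ℕ) (z : ℂ) : HasSum (fun n => c n * z ^ n * (m N n - (a : ℂ) ^ n))
      (∑ j ∈ range (J N + 1), Z N j * G ((h N j : ℂ) * z) - G ((a : ℂ) * z)) := by
    convert! (hasSum_sum (s := range (J N + 1))
      fun j _ => (hsum ((h N j : ℂ) * z)).mul_left (Z N j)).sub (hsum ((a : ℂ) * z)) using 2 with n
    simp only [hm, mul_sub, Finset.mul_sum, mul_pow]
    congr 1
    · exact Finset.sum_congr rfl fun j _ => by ring
    · ring
  set bd : ℕ → ℝ := fun n => ‖c n‖ * R ^ n * (A * Real.exp B ^ n + |a| ^ n) with hbd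
  have hbds : Summable bd := by
    have h1 := ((habs (R * Real.exp B) (by positivity)).mul_left A).add
      (habs (R * |a|) (by positivity))
    refine h1.congr fun n => ?_
    simp only [hbd, mul_pow]
    ring
  have hle (N n : ℕ) : ‖c n‖ * R ^ n * ‖m N n - (a : ℂ) ^ n‖ ≤ bd n := by
    simp only [hbd]
    gcongr
    refine (norm_sub_le _ _).trans (add_le_add (hmb N n) ?_)
    simp
  have hS : Tendsto (fun N => ∑' n, ‖c n‖ * R ^ n * ‖m N n - (a : ℂ) ^ n‖) atTop (nhds 0) := by
    have := tendsto_tsum_of_dominated_convergence (𝓕 := atTop)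
      (f := fun N n => ‖c n‖ * R ^ n * ‖m N n - (a : ℂ) ^ n‖) (g := fun _ => (0 : ℝ)) hbds
      (fun n => by
        simpa using ((hmt n).sub_const ((a : ℂ) ^ n)).norm.const_mul (‖c n‖ * R ^ n))
      (Eventually.of_forall fun N n => by
        rw [Real.norm_of_nonneg (by positivity)]
        exact hle N n)
    simpa using this
  rw [Metric.tendstoUniformlyOn_iff]
  intro ε hε
  filter_upwards [hS.eventually_lt_const hε] with N hN z hz
  rw [dist_comm, dist_eq_norm, ← (hF N z).tsum_eq]
  refine lt_of_le_of_lt ?_ hN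
  refine tsum_of_norm_bounded
    (Summable.of_nonneg_of_le (fun n => by positivity) (hle N) hbds).hasSum fun n => ?_
  rw [norm_mul, norm_mul, norm_pow]
  gcongr
  exact hR z hz
end
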